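/- Let G be a finite connected simple graph with toric ideal I_G ⊂ K[x_1,...,x_n]. Then G has a cycle of length 4 if and only if I_G contains a nonzero homogeneous polynomial of degree 2. -/

import Mathlib

open MvPolynomial Pointwise

/-- `ρ({i,j}) = e_i + e_j` : the 0/1 (incidence) vector of an edge. -/
noncomputable def rho {N : ℕ} (e : Sym2 (Fin N)) : Fin N → ℝ :=
  fun v => if v ∈ e then 1 else 0

/-- The edge polytope of a graph on `Fin N`. -/
noncomputable def edgePolytope {N : ℕ} (G : SimpleGraph (Fin N)) : Set (Fin N → ℝ) :=
  convexHull ℝ (rho '' G.edgeSet)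

/-- Number of lattice points of the `t`-th dilation (`= 1` for `t = 0`). -/
noncomputable def ehr {N : ℕ} (P : Set (Fin N → ℝ)) (t : ℕ) : ℕ :=
  if t = 0 then 1 else Nat.card {x : Fin N → ℤ // (fun i => (x i : ℝ)) ∈ (t : ℝ) • P}

/-- The dimension of a polytope: the rank of the direction of its affine span. -/
noncomputable def polyDim {N : ℕ} (P : Set (Fin N → ℝ)) : ℕ :=
  Module.finrank ℝ (affineSpan ℝ P).direction

/-- The `i`-th coefficient of `(1-λ)^{d+1} (1 + Σ_{t≥1} |tP ∩ Z^N| λ^t)`. -/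
noncomputable def deltaCoeff {N : ℕ} (P : Set (Fin N → ℝ)) (i : ℕ) : ℤ :=
  ∑ j ∈ Finset.range (i + 1),
    (-1 : ℤ) ^ j * (Nat.choose (polyDim P + 1) j : ℤ) * (ehr P (i - j) : ℤ)

/-- The degree of the δ-polynomial of `P`. -/
noncomputable def polyDeg {N : ℕ} (P : Set (Fin N → ℝ)) : ℕ :=
  sSup {i : ℕ | deltaCoeff P i ≠ 0}

/-- The monomial `t_i t_j s` attached to an edge `{i,j}`; `s` is the variable `none`. -/
noncomputable def edgeMonom (K : Type*) [Field K] {V : Type*} (e : Sym2 V) :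
    MvPolynomial (Option V) K :=
  Sym2.lift ⟨fun i j => X (some i) * X (some j) * X none, fun i j => by ring⟩ e

/-- The edge ring `K[G]`, the subalgebra generated by the monomials `t^{ρ(e)} s`. -/
noncomputable def edgeRing (K : Type*) [Field K] {V : Type*} (G : SimpleGraph V) :
    Subalgebra K (MvPolynomial (Option V) K) :=
  Algebra.adjoin K (edgeMonom K '' G.edgeSet)

/-- The toric ideal `I_G`: kernel of `x_e ↦ t^{ρ(e)} s`. -/
noncomputable def toricIdeal (K : Type*) [Field K] {V : Type*} (G : SimpleGraph V) :
    Ideal (MvPolynomial G.edgeSet K) :=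
  RingHom.ker (MvPolynomial.aeval (fun e : G.edgeSet => edgeMonom K (e : Sym2 V)) :
    MvPolynomial G.edgeSet K →ₐ[K] MvPolynomial (Option V) K)

/-- `S/I` has a `q`-linear (minimal graded free) resolution: there is a graded free
resolution of `S/I` in which the free module at homological step `i ≥ 1` is generated
in the single degree `q + i - 1`; equivalently all Betti numbers `β_{i,j}` with
`j ≠ q + i - 1` vanish. -/
def HasLinearResolution {σ K : Type*} [Field K] (q : ℕ)
    (I : Ideal (MvPolynomial σ K)) : Prop :=
  ∃ (b : ℕ → ℕ)
    (φ₀ : (Fin (b 0) →₀ MvPolynomial σ K) →ₗ[MvPolynomial σ K] MvPolynomial σ K)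
    (φ : ∀ i : ℕ,
      (Fin (b (i + 1)) →₀ MvPolynomial σ K) →ₗ[MvPolynomial σ K]
        (Fin (b i) →₀ MvPolynomial σ K)),
    LinearMap.range φ₀ = I ∧
    LinearMap.ker φ₀ = LinearMap.range (φ 0) ∧
    (∀ i, LinearMap.ker (φ i) = LinearMap.range (φ (i + 1))) ∧
    (∀ j, (φ₀ (Finsupp.single j 1)).IsHomogeneous q) ∧
    (∀ i j k, ((φ i (Finsupp.single j 1)) k).IsHomogeneous 1)

/-! The map `x_e ↦ t^{ρ(e)} s` sends monomials to monomials, so it acts on polynomials by pushing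
forward exponents. A nonzero homogeneous polynomial in its kernel therefore exhibits two distinct
monomials of the same degree with the same image, and conversely their difference is in the kernel.
In degree 2 this means two distinct pairs of edges `{e₁, e₂} ≠ {e₃, e₄}` that cover the same
multiset of four vertices. These are two different perfect matchings of four points; since no edge
is a loop, their being different forces the four points to be distinct, and their union is then a
4-cycle. Conversely, the two pairs of opposite edges of a 4-cycle are two such matchings.
-/

section MonomialMap

variable {R σ τ : Type*} (g : σ → τ →₀ ℕ)

theorem aeval_monomial_one_monomial [CommSemiring R] (m : σ →₀ ℕ) (r : R) :
    aeval (fun i => monomial (g i) (1 : R)) (monomial m r) =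
      monomial (Finsupp.linearCombination ℕ g m) r := by
  simp only [aeval_monomial, algebraMap_eq, monomial_pow, one_pow,
    Finsupp.linearCombination_apply, monomial_finsupp_sum_index]

theorem aeval_monomial_one_eq_mapDomain [CommSemiring R] (f : MvPolynomial σ R) :
    aeval (fun i => monomial (g i) (1 : R)) f =
      AddMonoidAlgebra.mapDomain (Finsupp.linearCombination ℕ g) f := by
  induction f using MvPolynomial.induction_on' with
  | monomial m r =>
    rw [aeval_monomial_one_monomial]
    exact (AddMonoidAlgebra.mapDomain_single (R := R)).symm
  | add p q hp hq =>
    rw [map_add, hp, hq]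
    exact (AddMonoidAlgebra.mapDomain_add _ _ _).symm

theorem aeval_monomial_one_ne_zero_of_injOn_support [CommSemiring R] {f : MvPolynomial σ R}
    (hf : f ≠ 0) (hinj : Set.InjOn (Finsupp.linearCombination ℕ g) f.support) :
    aeval (fun i => monomial (g i) (1 : R)) f ≠ 0 := by
  rw [aeval_monomial_one_eq_mapDomain]
  intro h
  have hcoeff : Finsupp.mapDomain (Finsupp.linearCombination ℕ g) (AddMonoidAlgebra.coeff f) =
      Finsupp.mapDomain (Finsupp.linearCombination ℕ g) 0 :=
    congrArg AddMonoidAlgebra.coeff h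
  exact hf (AddMonoidAlgebra.coeff_injective
    (Finsupp.mapDomain_injOn _ hinj (Set.Subset.refl _) (by simp) hcoeff))

theorem exists_isHomogeneous_aeval_monomial_one_eq_zero_iff [CommRing R] [Nontrivial R] (n : ℕ) :
    (∃ f : MvPolynomial σ R,
        aeval (fun i => monomial (g i) (1 : R)) f = 0 ∧ f ≠ 0 ∧ f.IsHomogeneous n) ↔
      ∃ m m' : σ →₀ ℕ, m.degree = n ∧ m'.degree = n ∧ m ≠ m' ∧
        Finsupp.linearCombination ℕ g m = Finsupp.linearCombination ℕ g m' := by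
  constructor
  · rintro ⟨f, hker, hf, hhom⟩
    have degree_eq {m : σ →₀ ℕ} (hm : m ∈ f.support) : m.degree = n := by
      rw [Finsupp.degree_eq_weight_one]
      exact hhom (mem_support_iff.mp hm)
    have not_injOn : ¬ Set.InjOn (Finsupp.linearCombination ℕ g) f.support := fun hinj =>
      aeval_monomial_one_ne_zero_of_injOn_support g hf hinj hker
    simp only [Set.InjOn, not_forall] at not_injOn
    obtain ⟨m, hm, m', hm', heq, hne⟩ := not_injOn
    exact ⟨m, m', degree_eq hm, degree_eq hm', hne, heq⟩
  · rintro ⟨m, m', hm, hm', hne, heq⟩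
    refine ⟨monomial m 1 - monomial m' 1, ?_, ?_,
      (isHomogeneous_monomial 1 hm).sub (isHomogeneous_monomial 1 hm')⟩
    · rw [map_sub, aeval_monomial_one_monomial, aeval_monomial_one_monomial, heq, sub_self]
    · rwa [sub_ne_zero, (monomial_left_injective one_ne_zero).ne_iff]

theorem finsupp_degree_eq_two_iff {m : σ →₀ ℕ} :
    m.degree = 2 ↔ ∃ i j, m = Finsupp.single i 1 + Finsupp.single j 1 := by
  classical
  constructor
  · intro h
    have card_eq_two : (Finsupp.toMultiset m).card = 2 := (Finsupp.card_toMultiset m).trans h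
    obtain ⟨i, j, hij⟩ := Multiset.card_eq_two.mp card_eq_two
    refine ⟨i, j, (Finsupp.toMultiset_eq_iff.mp hij).trans ?_⟩
    rw [Multiset.insert_eq_cons, ← Multiset.singleton_add, Multiset.toFinsupp_add,
      Multiset.toFinsupp_singleton, Multiset.toFinsupp_singleton]
  · rintro ⟨i, j, rfl⟩
    simp

theorem finsupp_single_one_add_single_one_eq_iff {i j k l : σ} :
    (Finsupp.single i 1 + Finsupp.single j 1 : σ →₀ ℕ) =
        Finsupp.single k 1 + Finsupp.single l 1 ↔ s(i, j) = s(k, l) := by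
  simp [Finsupp.single_add_single_eq_single_add_single]

theorem exists_isHomogeneous_two_aeval_monomial_one_eq_zero_iff [CommRing R] [Nontrivial R] :
    (∃ f : MvPolynomial σ R,
        aeval (fun i => monomial (g i) (1 : R)) f = 0 ∧ f ≠ 0 ∧ f.IsHomogeneous 2) ↔
      ∃ i j k l, s(i, j) ≠ s(k, l) ∧ g i + g j = g k + g l := by
  rw [exists_isHomogeneous_aeval_monomial_one_eq_zero_iff]
  constructor
  · rintro ⟨m, m', hm, hm', hne, heq⟩
    obtain ⟨i, j, rfl⟩ := finsupp_degree_eq_two_iff.mp hm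
    obtain ⟨k, l, rfl⟩ := finsupp_degree_eq_two_iff.mp hm'
    exact ⟨i, j, k, l, mt finsupp_single_one_add_single_one_eq_iff.mpr hne, by simpa using heq⟩
  · rintro ⟨i, j, k, l, hne, heq⟩
    exact ⟨_, _, finsupp_degree_eq_two_iff.mpr ⟨i, j, rfl⟩,
      finsupp_degree_eq_two_iff.mpr ⟨k, l, rfl⟩,
      mt finsupp_single_one_add_single_one_eq_iff.mp hne, by simpa using heq⟩

end MonomialMap

section Pairings

variable {V : Type*}

theorem sym2_toMultiset_mk (a b : V) : s(a, b).toMultiset = {a, b} := rfl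

theorem sym2_toMultiset_injective : Function.Injective (Sym2.toMultiset : Sym2 V → Multiset V) := by
  have coe_equivMultiset (e : Sym2 V) : (Sym2.equivMultiset V e : Multiset V) = e.toMultiset := by
    induction e with
    | _ a b => rfl
  intro e e' h
  rw [← coe_equivMultiset, ← coe_equivMultiset] at h
  exact (Sym2.equivMultiset V).injective (Subtype.ext h)

theorem sym2_pairing_eq_pairing_iff {a b c d : V} :
    s(s(a, b), s(c, d)) = s(s(a, d), s(b, c)) ↔ a = c ∨ b = d := by
  grind

-- The three alternatives are the perfect matchings of four points.
theorem sym2_pairing_trichotomy {a b c d : V} {e e' : Sym2 V}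
    (h : s(a, b).toMultiset + s(c, d).toMultiset = e.toMultiset + e'.toMultiset) :
    s(e, e') = s(s(a, b), s(c, d)) ∨ s(e, e') = s(s(a, d), s(b, c)) ∨
      s(e, e') = s(s(a, c), s(b, d)) := by
  wlog ha : a ∈ e generalizing e e'
  · have ha' : a ∈ e' := by
      have : a ∈ e.toMultiset + e'.toMultiset := h ▸ by simp
      simpa [ha] using this
    rw [Sym2.eq_swap (a := e)]
    exact this (h.trans (add_comm _ _)) ha'
  obtain ⟨x, rfl⟩ := ha
  have hcancel : ({b, c, d} : Multiset V) = x ::ₘ e'.toMultiset := by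
    apply (Multiset.cons_inj_right a).mp
    rw [sym2_toMultiset_mk, sym2_toMultiset_mk, sym2_toMultiset_mk] at h
    simpa only [Multiset.insert_eq_cons, Multiset.cons_add, Multiset.singleton_add] using h
  have hx : x = b ∨ x = c ∨ x = d := by
    simpa using (hcancel ▸ Multiset.mem_cons_self x _ : x ∈ ({b, c, d} : Multiset V))
  have eq_of_cons {y z : V} (hyz : ({b, c, d} : Multiset V) = x ::ₘ {y, z}) : e' = s(y, z) :=
    sym2_toMultiset_injective ((Multiset.cons_inj_right x).mp (hcancel.symm.trans hyz))
  rcases hx with rfl | rfl | rfl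
  · exact .inl (by rw [eq_of_cons rfl])
  · exact .inr (.inr (by rw [eq_of_cons (Multiset.cons_swap b x {d})]))
  · have hbc : ({b, c, x} : Multiset V) = x ::ₘ {b, c} := by
      rw [Multiset.pair_comm c x]
      exact Multiset.cons_swap b x {c}
    exact .inr (.inl (by rw [eq_of_cons hbc]))

end Pairings

section FourCycles

variable {V : Type*} {G : SimpleGraph V}

theorem exists_isCycle_length_four_iff :
    (∃ (v : V) (w : G.Walk v v), w.IsCycle ∧ w.length = 4) ↔
      ∃ a b c d, G.Adj a b ∧ G.Adj b c ∧ G.Adj c d ∧ G.Adj d a ∧ a ≠ c ∧ b ≠ d := by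
  constructor
  · rintro ⟨a, w, hw, hlen⟩
    match w, hw, hlen with
    | .cons (v := b) hab (.cons (v := c) hbc (.cons (v := d) hcd (.cons hda .nil))), hw, _ =>
      have hnodup : [b, c, d, a].Nodup := hw.support_nodup
      exact ⟨a, b, c, d, hab, hbc, hcd, hda, by grind, by grind⟩
  · rintro ⟨a, b, c, d, hab, hbc, hcd, hda, hac, hbd⟩
    have support_nodup : [b, c, d, a].Nodup := by grind [hab.ne, hbc.ne, hcd.ne, hda.ne]
    have edge_notMem : s(a, b) ∉ [s(b, c), s(c, d), s(d, a)] := by grind [hab.ne]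
    exact ⟨a, .cons hab (.cons hbc (.cons hcd (.cons hda .nil))),
      (SimpleGraph.Walk.cons_isCycle_iff _ _).mpr
        ⟨(SimpleGraph.Walk.isPath_def _).mpr support_nodup, edge_notMem⟩, rfl⟩

theorem exists_isCycle_length_four_iff_exists_toMultiset_add_eq :
    (∃ (v : V) (w : G.Walk v v), w.IsCycle ∧ w.length = 4) ↔
      ∃ e₁ e₂ e₃ e₄ : G.edgeSet, s(e₁, e₂) ≠ s(e₃, e₄) ∧
        e₁.1.toMultiset + e₂.1.toMultiset = e₃.1.toMultiset + e₄.1.toMultiset := by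
  rw [exists_isCycle_length_four_iff]
  constructor
  · rintro ⟨a, b, c, d, hab, hbc, hcd, hda, hac, hbd⟩
    refine ⟨⟨s(a, b), hab⟩, ⟨s(c, d), hcd⟩, ⟨s(a, d), hda.symm⟩, ⟨s(b, c), hbc⟩, fun h => ?_, ?_⟩
    · have pairing_eq := congrArg (Sym2.map Subtype.val) h
      exact (sym2_pairing_eq_pairing_iff.mp pairing_eq).elim hac hbd
    · simp only [sym2_toMultiset_mk, ← Multiset.singleton_add, Multiset.insert_eq_cons]
      abel
  · rintro ⟨⟨e₁, h₁⟩, ⟨e₂, h₂⟩, ⟨e₃, h₃⟩, ⟨e₄, h₄⟩, hne, heq⟩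
    induction e₁ with | _ a b
    induction e₂ with | _ c d
    have pairs_ne : s(e₃, e₄) ≠ s(s(a, b), s(c, d)) := fun h =>
      hne (Sym2.map.injective Subtype.val_injective h.symm)
    have adj : ∀ e ∈ s(e₃, e₄), e ∈ G.edgeSet := by simp [h₃, h₄]
    rcases sym2_pairing_trichotomy heq with h | h | h
    · exact absurd h pairs_ne
    · rw [h] at adj pairs_ne
      obtain ⟨had, hbc⟩ : G.Adj a d ∧ G.Adj b c := by simpa using adj
      obtain ⟨hac, hbd⟩ := not_or.mp (mt sym2_pairing_eq_pairing_iff.mpr pairs_ne.symm)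
      exact ⟨a, b, c, d, h₁, hbc, h₂, had.symm, hac, hbd⟩
    · rw [h] at adj pairs_ne
      obtain ⟨hac, hbd⟩ : G.Adj a c ∧ G.Adj b d := by simpa using adj
      rw [Sym2.eq_swap (a := c)] at pairs_ne
      obtain ⟨had, hbc⟩ := not_or.mp (mt sym2_pairing_eq_pairing_iff.mpr pairs_ne.symm)
      exact ⟨a, b, d, c, h₁, hbd, h₂.symm, hac.symm, had, hbc⟩

end FourCycles

section EdgeExponent

variable {V : Type*}

open Classical in
/-- The exponent vector `(ρ(e), 1)` of the monomial `t^{ρ(e)} s`, through which the toric ideal is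
read off from sums of exponents. As in `edgeMonom`, `none` indexes the variable `s`. -/
noncomputable def edgeExponent (e : Sym2 V) : Option V →₀ ℕ :=
  Multiset.toFinsupp (e.toMultiset.map some) + Finsupp.single none 1

theorem edgeMonom_eq_monomial_edgeExponent (K : Type*) [Field K] (e : Sym2 V) :
    edgeMonom K e = monomial (edgeExponent e) 1 := by
  classical
  induction e with
  | _ a b =>
    simp [edgeMonom, edgeExponent, sym2_toMultiset_mk, X, monomial_mul, Multiset.insert_eq_cons,
      ← Multiset.singleton_add]

theorem edgeExponent_add_eq_iff {e₁ e₂ e₃ e₄ : Sym2 V} :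
    edgeExponent e₁ + edgeExponent e₂ = edgeExponent e₃ + edgeExponent e₄ ↔
      e₁.toMultiset + e₂.toMultiset = e₃.toMultiset + e₄.toMultiset := by
  classical
  simp only [edgeExponent, add_add_add_comm _ (Finsupp.single none 1), add_left_inj,
    ← Multiset.toFinsupp_add, ← Multiset.map_add]
  rw [Multiset.toFinsupp.injective.eq_iff,
    (Multiset.map_injective (Option.some_injective V)).eq_iff]

end EdgeExponent

theorem has_four_cycle_iff_toricIdeal_quadric_general
    {V : Type*} (K : Type*) [Field K] (G : SimpleGraph V) :
    (∃ (v : V) (w : G.Walk v v), w.IsCycle ∧ w.length = 4) ↔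
      ∃ f : MvPolynomial G.edgeSet K,
        f ∈ toricIdeal K G ∧ f ≠ 0 ∧ f.IsHomogeneous 2 := by
  simp only [toricIdeal, RingHom.mem_ker, edgeMonom_eq_monomial_edgeExponent,
    exists_isHomogeneous_two_aeval_monomial_one_eq_zero_iff, edgeExponent_add_eq_iff]
  exact exists_isCycle_length_four_iff_exists_toMultiset_add_eq

/-- A finite connected simple graph `G` has a `4`-cycle if and only if
its toric ideal `I_G` contains a nonzero homogeneous polynomial of degree `2`. -/
theorem has_four_cycle_iff_toricIdeal_quadric
    {N : ℕ} (K : Type*) [Field K] (G : SimpleGraph (Fin N)) (hG : G.Connected) :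
    (∃ (v : Fin N) (w : G.Walk v v), w.IsCycle ∧ w.length = 4) ↔
      ∃ f : MvPolynomial G.edgeSet K,
        f ∈ toricIdeal K G ∧ f ≠ 0 ∧ f.IsHomogeneous 2 :=
  has_four_cycle_iff_toricIdeal_quadric_general K G
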